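/- There exists a binary self-dual code of length 68 and minimum (nonzero) weight 12 that has exactly 686 codewords of weight 12 and exactly 13960 codewords of weight 14 (i.e. a self-dual [68,34,12] code with weight enumerator W_{68,2} with γ = 2 and β = 61). -/

import Mathlib

/-- The dual of a code (submodule of `ι → R`) with respect to the standard bilinear form. -/
def dualCode {R : Type*} [CommRing R] {ι : Type*} [Fintype ι]
    (C : Submodule R (ι → R)) : Submodule R (ι → R) where
  carrier := {x | ∀ c ∈ C, ∑ i, x i * c i = 0}
  add_mem' := by
    intro a b ha hb c hc
    simp only [Set.mem_setOf_eq] at ha hb ⊢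
    simp [Pi.add_apply, add_mul, Finset.sum_add_distrib, ha c hc, hb c hc]
  zero_mem' := by
    intro c hc
    simp
  smul_mem' := by
    intro r a ha c hc
    simp only [Set.mem_setOf_eq] at ha ⊢
    simp [Pi.smul_apply, smul_eq_mul, mul_assoc, ← Finset.mul_sum, ha c hc]

/-- A code is self-dual if it equals its dual. -/
def IsSelfDual {R : Type*} [CommRing R] {ι : Type*} [Fintype ι]
    (C : Submodule R (ι → R)) : Prop :=
  C = dualCode C

/-!
Let `C` be a self-dual binary code of length `68`. The functional `c ↦ wt(c) / 2 mod 2` on `C` is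
`c ↦ s ⬝ᵥ c` for some word `s`, and the coset `C + s` is the shadow of `C` (Conway and Sloane). Up
to the signs `(-1) ^ (w / 2)`, the MacWilliams transform of the weight distribution `B` of the
shadow is that of `C`. The weights of the shadow are congruent to `34` modulo `4` and `B` is
symmetric, so a polynomial in `(j - 34) ^ 2` that vanishes at `j = 14, 18, …, 34` leaves only
`B 2`, `B 6` and `B 10`. Hence, if `C` has minimum weight at least `12`, these three numbers
determine the numbers of codewords of weights `12` and `14`; for `W_{68,2}` this reads
`β = B 10 + 14 * B 6 + 104 * B 2` and `γ = B 6 + 16 * B 2`.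

The code below has generator matrix `[1 | A]` with `A` orthogonal, so each half of a word determines
the other, and the words of weight at most `10` in `C` and in its shadow are found by enumerating
sums of at most five rows of `A` or of its transpose. Only `0` occurs in `C`, and the shadow has
`B 2 = 0`, `B 6 = 2` and `B 10 = 33`.
-/

open Finset Matrix

section Weights

variable {ι : Type*} [Fintype ι] {C : Submodule (ZMod 2) (ι → ZMod 2)} {s : ι → ZMod 2}

lemma hammingNorm_eq_sum_val (v : ι → ZMod 2) : hammingNorm v = ∑ i, (v i).val := by
  have val_eq_ite : ∀ a : ZMod 2, a.val = if a ≠ 0 then 1 else 0 := by decide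
  simp only [hammingNorm, card_filter, val_eq_ite]

lemma natCast_hammingNorm_mul (v w : ι → ZMod 2) : (hammingNorm (v * w) : ZMod 2) = v ⬝ᵥ w := by
  simp [hammingNorm_eq_sum_val, dotProduct]

lemma natCast_hammingNorm (v : ι → ZMod 2) : (hammingNorm v : ZMod 2) = v ⬝ᵥ 1 := by
  rw [← natCast_hammingNorm_mul, mul_one]

lemma hammingNorm_add_add_two_mul (v w : ι → ZMod 2) :
    hammingNorm (v + w) + 2 * hammingNorm (v * w) = hammingNorm v + hammingNorm w := by
  have val_add_add : ∀ a b : ZMod 2, (a + b).val + 2 * (a * b).val = a.val + b.val := by decide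
  simp only [hammingNorm_eq_sum_val, mul_sum, ← sum_add_distrib, Pi.add_apply, Pi.mul_apply,
    val_add_add]

lemma hammingNorm_one_add (v : ι → ZMod 2) :
    hammingNorm (1 + v) + hammingNorm v = Fintype.card ι := by
  have val_one_add : ∀ a : ZMod 2, (1 + a).val + a.val = 1 := by decide
  simp [hammingNorm_eq_sum_val, ← sum_add_distrib, val_one_add]

lemma mem_dualCode_span {R : Type*} [CommRing R] {S : Set (ι → R)} {v : ι → R} :
    v ∈ dualCode (Submodule.span R S) ↔ ∀ c ∈ S, v ⬝ᵥ c = 0 := by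
  refine ⟨fun hv c hc ↦ hv c (Submodule.subset_span hc), fun hv c hc ↦ ?_⟩
  change v ⬝ᵥ c = 0
  induction hc using Submodule.span_induction with
  | mem c hc => exact hv c hc
  | zero => exact dotProduct_zero v
  | add c d _ _ hc hd => rw [dotProduct_add, hc, hd, add_zero]
  | smul a c _ hc => rw [dotProduct_smul, hc, smul_zero]

namespace IsSelfDual

lemma dotProduct_eq_zero {R : Type*} [CommRing R] {C : Submodule R (ι → R)} (hC : IsSelfDual C)
    {v w : ι → R} (hv : v ∈ C) (hw : w ∈ C) : v ⬝ᵥ w = 0 := by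
  rw [hC] at hv
  exact hv w hw

lemma even_hammingNorm_mul (hC : IsSelfDual C) {v w : ι → ZMod 2} (hv : v ∈ C) (hw : w ∈ C) :
    Even (hammingNorm (v * w)) := by
  rw [← ZMod.natCast_eq_zero_iff_even, natCast_hammingNorm_mul, hC.dotProduct_eq_zero hv hw]

lemma even_hammingNorm (hC : IsSelfDual C) {v : ι → ZMod 2} (hv : v ∈ C) :
    Even (hammingNorm v) := by
  have mul_self : ∀ a : ZMod 2, a * a = a := by decide
  simpa only [show v * v = v from funext fun i ↦ mul_self (v i)] using hC.even_hammingNorm_mul hv hv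

lemma one_mem (hC : IsSelfDual C) : 1 ∈ C := by
  rw [hC]
  intro c hc
  change 1 ⬝ᵥ c = 0
  rw [dotProduct_comm, ← natCast_hammingNorm, ZMod.natCast_eq_zero_iff_even]
  exact hC.even_hammingNorm hc

lemma natCast_half_hammingNorm_add (hC : IsSelfDual C) {v w : ι → ZMod 2} (hv : v ∈ C)
    (hw : w ∈ C) : ((hammingNorm (v + w) / 2 : ℕ) : ZMod 2) =
      (hammingNorm v / 2 : ℕ) + (hammingNorm w / 2 : ℕ) := by
  obtain ⟨a, ha⟩ := hC.even_hammingNorm hv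
  obtain ⟨b, hb⟩ := hC.even_hammingNorm hw
  obtain ⟨c, hc⟩ := hC.even_hammingNorm_mul hv hw
  have hadd := hammingNorm_add_add_two_mul v w
  have hhalf : hammingNorm (v + w) / 2 + 2 * c = hammingNorm v / 2 + hammingNorm w / 2 := by omega
  have := congrArg (Nat.cast : ℕ → ZMod 2) hhalf
  simpa [show (2 : ZMod 2) = 0 from rfl] using this

end IsSelfDual

/-- `s` represents the shadow of `C`: the functional `c ↦ wt(c) / 2 mod 2`, which is linear on a
self-dual code, is `c ↦ s ⬝ᵥ c`. The shadow itself is then the coset `C + s`. -/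
def IsShadowVector (C : Submodule (ZMod 2) (ι → ZMod 2)) (s : ι → ZMod 2) : Prop :=
  ∀ c ∈ C, s ⬝ᵥ c = (hammingNorm c / 2 : ℕ)

lemma isShadowVector_span {S : Set (ι → ZMod 2)} (hC : IsSelfDual (Submodule.span (ZMod 2) S))
    (hs : ∀ c ∈ S, s ⬝ᵥ c = (hammingNorm c / 2 : ℕ)) :
    IsShadowVector (Submodule.span (ZMod 2) S) s := by
  intro c hc
  induction hc using Submodule.span_induction with
  | mem c hc => exact hs c hc
  | zero => simp
  | add c d hc hd ihc ihd => rw [dotProduct_add, hC.natCast_half_hammingNorm_add hc hd, ihc, ihd]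
  | smul a c _ ih =>
    obtain rfl | rfl : a = 0 ∨ a = 1 := by decide +revert
    · simp
    · simpa using ih

/-- The number of words of weight `w` in the coset `C + s`. -/
noncomputable def cosetWeightCount (C : Submodule (ZMod 2) (ι → ZMod 2)) (s : ι → ZMod 2)
    (w : ℕ) : ℕ :=
  {c | c ∈ C ∧ hammingNorm (c + s) = w}.ncard

lemma cosetWeightCount_zero_right (C : Submodule (ZMod 2) (ι → ZMod 2)) (w : ℕ) :
    cosetWeightCount C 0 w = {c | c ∈ C ∧ hammingNorm c = w}.ncard := by
  simp only [cosetWeightCount, add_zero]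

lemma cosetWeightCount_pos_iff {w : ℕ} :
    0 < cosetWeightCount C s w ↔ ∃ c ∈ C, hammingNorm (c + s) = w :=
  Set.ncard_pos (Set.toFinite _)

lemma cosetWeightCount_eq_zero_iff {w : ℕ} :
    cosetWeightCount C s w = 0 ↔ ∀ c ∈ C, hammingNorm (c + s) ≠ w := by
  rw [← Nat.le_zero, ← not_lt, cosetWeightCount_pos_iff]
  push Not
  rfl

lemma sum_comp_hammingNorm_coset [Fintype C] (s : ι → ZMod 2) (f : ℕ → ℤ) :
    ∑ c : C, f (hammingNorm (c.1 + s)) =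
      ∑ w ∈ range (Fintype.card ι + 1), (cosetWeightCount C s w : ℤ) * f w := by
  have fiber_card (w : ℕ) :
      #{c : C | hammingNorm (c.1 + s) = w} = cosetWeightCount C s w := by
    rw [cosetWeightCount, ← Set.ncard_coe_finset, ← Set.ncard_image_of_injective _
      Subtype.val_injective]
    congr 1
    ext c
    simp [and_comm]
  rw [← sum_fiberwise_of_maps_to (t := range (Fintype.card ι + 1))
    (g := fun c : C ↦ hammingNorm (c.1 + s))
    fun c _ ↦ mem_range_succ_iff.2 hammingNorm_le_card_fintype]
  refine sum_congr rfl fun w _ ↦ ?_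
  rw [← fiber_card, ← nsmul_eq_mul, ← sum_const]
  exact sum_congr rfl fun c hc ↦ by rw [(mem_filter.1 hc).2]

lemma IsSelfDual.cosetWeightCount_card_sub (hC : IsSelfDual C) (s : ι → ZMod 2) {w : ℕ}
    (hw : w ≤ Fintype.card ι) :
    cosetWeightCount C s (Fintype.card ι - w) = cosetWeightCount C s w := by
  have weight_one_add (c : ι → ZMod 2) := hammingNorm_one_add (c + s)
  refine Set.ncard_congr (fun c _ ↦ 1 + c) (fun c ⟨hc, hcw⟩ ↦ ⟨C.add_mem hC.one_mem hc, ?_⟩)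
    (fun c d _ _ h ↦ add_left_cancel h)
    fun c ⟨hc, hcw⟩ ↦ ⟨1 + c, ⟨C.add_mem hC.one_mem hc, ?_⟩, ?_⟩
  · rw [add_assoc]
    have := weight_one_add c
    omega
  · rw [add_assoc]
    have := weight_one_add c
    omega
  · rw [← add_assoc, ZModModule.add_self, zero_add]

lemma IsShadowVector.hammingNorm_add_modEq (hC : IsSelfDual C) (hs : IsShadowVector C s)
    {c : ι → ZMod 2} (hc : c ∈ C) : hammingNorm (c + s) ≡ hammingNorm s [MOD 4] := by
  have hadd := hammingNorm_add_add_two_mul s c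
  have hmul := hs c hc
  rw [← natCast_hammingNorm_mul, ZMod.natCast_eq_natCast_iff, Nat.ModEq] at hmul
  obtain ⟨a, ha⟩ := hC.even_hammingNorm hc
  rw [add_comm, Nat.ModEq]
  omega

end Weights

section Krawtchouk

lemma sum_zmod_two {M : Type*} [AddCommMonoid M] (f : ZMod 2 → M) : ∑ a, f a = f 0 + f 1 :=
  Fin.sum_univ_two f

variable {ι : Type*} [Fintype ι] {C : Submodule (ZMod 2) (ι → ZMod 2)} {s : ι → ZMod 2}

/-- The nontrivial additive character `a ↦ (-1) ^ a` of `ZMod 2`. -/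
def signChar : AddChar (ZMod 2) ℤ := AddChar.zmodChar 2 (ζ := -1) (by norm_num)

lemma signChar_natCast (a : ℕ) : signChar a = (-1) ^ a := AddChar.zmodChar_apply' _ a

lemma sum_signChar_dotProduct_eq_zero [Fintype C] {u : ι → ZMod 2} (hu : u ∉ dualCode C) :
    ∑ c : C, signChar (u ⬝ᵥ c.1) = 0 := by
  let ψ : AddChar C ℤ := signChar.compAddMonoidHom
    ((dotProductBilin (ZMod 2) (ZMod 2) u).domRestrict C).toAddMonoidHom
  have ψ_apply (c : C) : ψ c = signChar (u ⬝ᵥ c.1) := rfl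
  have ψ_ne_zero : ψ ≠ 0 := by
    contrapose! hu
    intro c hc
    have sign_eq_one : ψ ⟨c, hc⟩ = 1 := by rw [hu, AddChar.zero_apply]
    have eq_zero_of_sign : ∀ a : ZMod 2, signChar a = 1 → a = 0 := by decide
    exact eq_zero_of_sign _ sign_eq_one
  simpa only [ψ_apply] using AddChar.sum_eq_zero_iff_ne_zero.2 ψ_ne_zero

/-- The value at `j` of the binary Krawtchouk polynomial of degree `w` for words of length `n`. -/
def krawtchouk (n w j : ℕ) : ℤ :=
  ∑ p ∈ antidiagonal w, (-1) ^ p.1 * j.choose p.1 * (n - j).choose p.2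

lemma coeff_one_sub_X_pow_mul_one_add_X_pow (n w j : ℕ) :
    ((1 - .X) ^ j * (1 + .X) ^ (n - j) : Polynomial ℤ).coeff w = krawtchouk n w j := by
  have coeff_one_sub_X_pow (k : ℕ) :
      ((1 - .X : Polynomial ℤ) ^ j).coeff k = (-1) ^ k * j.choose k := by
    have comp_neg_X :
        (1 - .X : Polynomial ℤ) ^ j = ((1 + Polynomial.X) ^ j).comp (.C (-1) * .X) := by
      simp [sub_eq_add_neg]
    rw [comp_neg_X, Polynomial.comp_C_mul_X_coeff, Polynomial.coeff_one_add_X_pow, mul_comm]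
  simp only [Polynomial.coeff_mul, coeff_one_sub_X_pow, Polynomial.coeff_one_add_X_pow, krawtchouk]

lemma sum_signChar_mul_X_pow_hammingNorm [DecidableEq ι] (v : ι → ZMod 2) :
    ∑ u : ι → ZMod 2, .C (signChar (u ⬝ᵥ v)) * .X ^ hammingNorm u =
      ((1 - .X) ^ hammingNorm v * (1 + .X) ^ (Fintype.card ι - hammingNorm v) :
        Polynomial ℤ) := by
  let f (i : ι) (a : ZMod 2) : Polynomial ℤ := .C (signChar (a * v i)) * .X ^ a.val
  have prod_f (u : ι → ZMod 2) :
      ∏ i, f i (u i) = .C (signChar (u ⬝ᵥ v)) * .X ^ hammingNorm u := by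
    have sign_sum : signChar (u ⬝ᵥ v) = ∏ i, signChar (u i * v i) :=
      map_prod signChar.toMonoidHom (fun i ↦ Multiplicative.ofAdd (u i * v i)) univ
    simp only [f, prod_mul_distrib, prod_pow_eq_pow_sum, hammingNorm_eq_sum_val, sign_sum,
      map_prod]
  have sum_f (i : ι) : ∑ a, f i a = if v i ≠ 0 then 1 - .X else 1 + .X := by
    have sum_sign : ∀ b : ZMod 2, signChar (1 * b) = if b ≠ 0 then -1 else 1 := by decide
    rw [sum_zmod_two]
    simp only [f, sum_sign]
    split_ifs <;> simp [sub_eq_add_neg, ZMod.val_one]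
  calc ∑ u : ι → ZMod 2, .C (signChar (u ⬝ᵥ v)) * .X ^ hammingNorm u
      = ∏ i, ∑ a, f i a := by simp only [Fintype.prod_sum, prod_f]
    _ = _ := by
      have card_filter_not := card_filter_add_card_filter_not (s := univ) (fun i ↦ v i ≠ 0)
      simp only [sum_f, prod_ite, prod_const]
      rw [hammingNorm, ← card_univ, ← card_filter_not, Nat.add_sub_cancel_left]

lemma sum_signChar_dotProduct_of_weight [DecidableEq ι] (v : ι → ZMod 2) (w : ℕ) :
    ∑ u with hammingNorm u = w, signChar (u ⬝ᵥ v) =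
      krawtchouk (Fintype.card ι) w (hammingNorm v) := by
  rw [← coeff_one_sub_X_pow_mul_one_add_X_pow, ← sum_signChar_mul_X_pow_hammingNorm]
  simp only [Polynomial.finsetSum_coeff, Polynomial.coeff_C_mul_X_pow, sum_filter, eq_comm]

theorem IsShadowVector.sum_cosetWeightCount_mul_krawtchouk (hC : IsSelfDual C)
    (hs : IsShadowVector C s) (w : ℕ) :
    ∑ j ∈ range (Fintype.card ι + 1),
        (cosetWeightCount C s j : ℤ) * krawtchouk (Fintype.card ι) w j =
      Nat.card C * (-1) ^ (w / 2) * cosetWeightCount C 0 w := by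
  classical
  have inner_sum (u : ι → ZMod 2) (hu : hammingNorm u = w) :
      ∑ c : C, signChar (u ⬝ᵥ (c.1 + s)) =
        if u ∈ C then (Nat.card C : ℤ) * (-1) ^ (w / 2) else 0 := by
    simp only [dotProduct_add, AddChar.map_add_eq_mul, ← sum_mul]
    split_ifs with huC
    · rw [dotProduct_comm u s, hs u huC, hu, signChar_natCast]
      simp [hC.dotProduct_eq_zero huC]
    · rw [hC] at huC
      rw [sum_signChar_dotProduct_eq_zero huC, zero_mul]
  rw [← sum_comp_hammingNorm_coset]
  simp only [← sum_signChar_dotProduct_of_weight]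
  rw [sum_comm, sum_congr rfl fun u hu ↦ inner_sum u (mem_filter.1 hu).2, ← sum_filter,
    sum_const, nsmul_eq_mul, mul_comm, cosetWeightCount_zero_right, filter_filter,
    ← Set.ncard_coe_finset]
  congr 3
  ext
  simp [and_comm]

end Krawtchouk

section SystematicCode

lemma dotProduct_finAppend {R : Type*} [CommRing R] {m n : ℕ} (x x' : Fin m → R)
    (y y' : Fin n → R) : Fin.append x y ⬝ᵥ Fin.append x' y' = x ⬝ᵥ x' + y ⬝ᵥ y' := by
  simp [dotProduct, Fin.sum_univ_add]

lemma hammingNorm_finAppend {m n : ℕ} (x : Fin m → ZMod 2) (y : Fin n → ZMod 2) :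
    hammingNorm (Fin.append x y) = hammingNorm x + hammingNorm y := by
  simp [hammingNorm_eq_sum_val, Fin.sum_univ_add]

lemma finAppend_inj {α : Type*} {m n : ℕ} {x x' : Fin m → α} {y y' : Fin n → α} :
    Fin.append x y = Fin.append x' y' ↔ x = x' ∧ y = y' :=
  ((Fin.appendEquiv m n).injective.eq_iff (a := (x, y)) (b := (x', y'))).trans Prod.mk_inj

lemma finAppend_add {R : Type*} [Add R] {m n : ℕ} (x x' : Fin m → R) (y y' : Fin n → R) :
    Fin.append x y + Fin.append x' y' = Fin.append (x + x') (y + y') := by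
  ext i
  refine Fin.addCases (fun i ↦ ?_) (fun i ↦ ?_) i <;> simp

variable {R : Type*} [CommRing R] {m n : ℕ}

/-- The code with generator matrix `[1 | A]`. -/
def systematicCode (A : Matrix (Fin m) (Fin n) R) : Submodule R (Fin (m + n) → R) :=
  Submodule.span R (Set.range fun i ↦ Fin.append (Pi.single i 1) (A i))

lemma coe_systematicCode (A : Matrix (Fin m) (Fin n) R) :
    (systematicCode A : Set (Fin (m + n) → R)) = Set.range fun x ↦ Fin.append x (x ᵥ* A) := by
  ext v
  simp only [systematicCode, SetLike.mem_coe, Submodule.mem_span_range_iff_exists_fun,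
    Set.mem_range]
  refine exists_congr fun x ↦ Eq.congr_left ?_
  ext i
  refine Fin.addCases (fun i ↦ ?_) (fun i ↦ ?_) i <;>
    simp [Finset.sum_apply, vecMul, dotProduct, Pi.single_apply]

lemma finAppend_mem_systematicCode {A : Matrix (Fin m) (Fin n) R} {x : Fin m → R}
    {y : Fin n → R} : Fin.append x y ∈ systematicCode A ↔ y = x ᵥ* A := by
  rw [← SetLike.mem_coe, coe_systematicCode]
  constructor
  · rintro ⟨x', h⟩
    obtain ⟨rfl, rfl⟩ := finAppend_inj.1 h
    rfl
  · rintro rfl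
    exact ⟨x, rfl⟩

lemma finAppend_vecMul_injective (A : Matrix (Fin m) (Fin n) R) :
    Function.Injective fun x ↦ Fin.append x (x ᵥ* A) :=
  fun _ _ h ↦ (finAppend_inj.1 h).1

lemma isSelfDual_systematicCode {A : Matrix (Fin n) (Fin n) R} (hA : A * Aᵀ = -1) :
    IsSelfDual (systematicCode A) := by
  have transpose_mul : Aᵀ * A = -1 := by
    rw [← neg_eq_iff_eq_neg, ← neg_mul, ← mul_eq_one_comm, mul_neg, hA, neg_neg]
  ext v
  obtain ⟨⟨x, y⟩, rfl⟩ := (Fin.appendEquiv n n).surjective v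
  change Fin.append x y ∈ _ ↔ Fin.append x y ∈ _
  have mem_dual : Fin.append x y ∈ dualCode (systematicCode A) ↔ x + y ᵥ* Aᵀ = 0 := by
    simp only [systematicCode, mem_dualCode_span, Set.forall_mem_range, dotProduct_finAppend,
      dotProduct_single_one, funext_iff]
    rfl
  rw [finAppend_mem_systematicCode, mem_dual]
  constructor
  · rintro rfl
    rw [vecMul_vecMul, hA, vecMul_neg, vecMul_one, add_neg_cancel]
  · intro h
    rw [eq_neg_of_add_eq_zero_left h, neg_vecMul, vecMul_vecMul, transpose_mul, vecMul_neg,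
      vecMul_one, neg_neg]

/-- The vector `h` with `h i = wt(eᵢ | Aᵢ) / 2 mod 2`, `(eᵢ | Aᵢ)` being the rows of `[1 | A]`. -/
def halfRowWeights (A : Matrix (Fin m) (Fin n) (ZMod 2)) (i : Fin m) : ZMod 2 :=
  ((1 + hammingNorm (A i)) / 2 : ℕ)

lemma isShadowVector_systematicCode {A : Matrix (Fin n) (Fin n) (ZMod 2)} (hA : A * Aᵀ = 1) :
    IsShadowVector (systematicCode A) (Fin.append 0 (halfRowWeights A ᵥ* A)) := by
  refine isShadowVector_span (isSelfDual_systematicCode (hA.trans ?_)) ?_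
  · exact (ZModModule.neg_eq_self 1).symm
  · rintro _ ⟨i, rfl⟩
    have row_dot : (halfRowWeights A ᵥ* A) ⬝ᵥ A i = halfRowWeights A i := calc
      _ = (halfRowWeights A ᵥ* A ᵥ* Aᵀ) i := rfl
      _ = _ := by rw [vecMul_vecMul, hA, vecMul_one]
    have weight_single : hammingNorm (Pi.single i 1 : Fin n → ZMod 2) = 1 := by
      simp [hammingNorm, Pi.single_apply, filter_eq']
    simp [dotProduct_finAppend, hammingNorm_finAppend, row_dot, weight_single, halfRowWeights]

/-- The number of words of the coset of `(0, t)` in the code of `[1 | A]` whose left and right parts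
have weights `k` and `l`. -/
def splitWeightCount (A : Matrix (Fin m) (Fin n) (ZMod 2)) (t : Fin n → ZMod 2) (k l : ℕ) : ℕ :=
  #{x | hammingNorm x = k ∧ hammingNorm (x ᵥ* A + t) = l}

lemma cosetWeightCount_systematicCode (A : Matrix (Fin m) (Fin n) (ZMod 2)) (t : Fin n → ZMod 2)
    (w : ℕ) : cosetWeightCount (systematicCode A) (Fin.append 0 t) w =
      ∑ p ∈ antidiagonal w, splitWeightCount A t p.1 p.2 := by
  have coset_eq : {c | c ∈ systematicCode A ∧ hammingNorm (c + Fin.append 0 t) = w} =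
      (fun x ↦ Fin.append x (x ᵥ* A)) ''
        ({x | hammingNorm x + hammingNorm (x ᵥ* A + t) = w} : Finset (Fin m → ZMod 2)) := by
    ext c
    rw [Set.mem_ofPred_eq, ← SetLike.mem_coe, coe_systematicCode]
    constructor
    · rintro ⟨⟨x, rfl⟩, hx⟩
      rw [finAppend_add, hammingNorm_finAppend, add_zero] at hx
      exact ⟨x, by simpa using hx, rfl⟩
    · rintro ⟨x, hx, rfl⟩
      refine ⟨⟨x, rfl⟩, ?_⟩
      rw [finAppend_add, hammingNorm_finAppend, add_zero]
      simpa using hx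
  rw [cosetWeightCount, coset_eq, Set.ncard_image_of_injective _ (finAppend_vecMul_injective A),
    Set.ncard_coe_finset]
  simp only [splitWeightCount, ← Prod.mk_inj]
  rw [card_eq_sum_card_fiberwise (t := antidiagonal w)
    (f := fun x ↦ (hammingNorm x, hammingNorm (x ᵥ* A + t))) fun x hx ↦ by simpa using hx]
  refine sum_congr rfl fun p hp ↦ congrArg card ?_
  rw [filter_filter]
  refine filter_congr fun x _ ↦ and_iff_right_of_imp ?_
  rintro rfl
  exact mem_antidiagonal.1 hp

lemma splitWeightCount_swap {A : Matrix (Fin n) (Fin n) (ZMod 2)} (hA : A * Aᵀ = 1)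
    (h : Fin n → ZMod 2) (k l : ℕ) :
    splitWeightCount A (h ᵥ* A) k l = splitWeightCount Aᵀ h l k := by
  have hA' : Aᵀ * A = 1 := mul_eq_one_comm.1 hA
  have add_vecMul_transpose (x : Fin n → ZMod 2) : (x ᵥ* A + h ᵥ* A) ᵥ* Aᵀ = x + h := by
    rw [← add_vecMul, vecMul_vecMul, hA, vecMul_one]
  have transpose_vecMul (y : Fin n → ZMod 2) : (y ᵥ* Aᵀ + h) ᵥ* A + h ᵥ* A = y := by
    rw [add_vecMul, vecMul_vecMul, hA', vecMul_one, add_assoc, ZModModule.add_self, add_zero]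
  have add_add_self (x : Fin n → ZMod 2) : x + h + h = x := by
    rw [add_assoc, ZModModule.add_self, add_zero]
  refine card_nbij' (fun x ↦ x ᵥ* A + h ᵥ* A) (fun y ↦ y ᵥ* Aᵀ + h) ?_ ?_ ?_ ?_ <;>
    intro x <;>
    simp +contextual [add_vecMul_transpose, transpose_vecMul, add_add_self]

lemma cosetWeightCount_systematicCode_two_mul {A : Matrix (Fin n) (Fin n) (ZMod 2)}
    (hA : A * Aᵀ = 1) (h : Fin n → ZMod 2) (d : ℕ) :
    cosetWeightCount (systematicCode A) (Fin.append 0 (h ᵥ* A)) (2 * d) =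
      ∑ k ∈ range (d + 1), splitWeightCount A (h ᵥ* A) k (2 * d - k) +
        ∑ k ∈ range d, splitWeightCount Aᵀ h k (2 * d - k) := by
  rw [cosetWeightCount_systematicCode, Nat.sum_antidiagonal_eq_sum_range_succ
      (splitWeightCount A (h ᵥ* A)), show (2 * d).succ = d + 1 + d by omega, sum_range_add]
  congr 1
  rw [← sum_range_reflect]
  refine sum_congr rfl fun k hk ↦ ?_
  rw [mem_range] at hk
  rw [splitWeightCount_swap hA]
  congr 1 <;> omega

end SystematicCode

section PackedWords

variable {m n : ℕ}

/-- A binary word as a number whose base-`64` digits are its entries, so that adding words is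
`Nat.xor`, and the weight of a word of length less than `63` is a remainder modulo `63`. -/
def pack (v : Fin n → ZMod 2) : ℕ := Nat.ofDigits 64 (List.ofFn fun i ↦ (v i).val)

lemma pack_mod_sixtyThree (hn : n < 63) (v : Fin n → ZMod 2) : pack v % 63 = hammingNorm v := by
  have modEq_sum : pack v ≡ hammingNorm v [MOD 63] := by
    rw [hammingNorm_eq_sum_val, ← List.sum_ofFn, ← Nat.ofDigits_one]
    exact Nat.ofDigits_modEq' 64 1 63 rfl _
  rw [modEq_sum, Nat.mod_eq_of_lt]
  exact (hammingNorm_le_card_fintype.trans_eq (Fintype.card_fin n)).trans_lt hn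

lemma two_pow_mul_add_xor {i a b : ℕ} (ha : a < 2 ^ i) (hb : b < 2 ^ i) (x y : ℕ) :
    (2 ^ i * x + a) ^^^ (2 ^ i * y + b) = 2 ^ i * (x ^^^ y) + (a ^^^ b) := by
  refine Nat.eq_of_testBit_eq fun j ↦ ?_
  simp only [Nat.testBit_xor, Nat.testBit_two_pow_mul_add _ ha, Nat.testBit_two_pow_mul_add _ hb,
    Nat.testBit_two_pow_mul_add _ (Nat.xor_lt_two_pow ha hb)]
  split_ifs <;> rfl

lemma pack_add (v w : Fin n → ZMod 2) : pack (v + w) = pack v ^^^ pack w := by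
  have val_add : ∀ a b : ZMod 2, (a + b).val = a.val ^^^ b.val := by decide
  have val_lt (a : ZMod 2) : a.val < 2 ^ 6 := (ZMod.val_lt a).trans (by norm_num)
  induction n with
  | zero => simp [pack]
  | succ n ih =>
    have pack_succ (u : Fin (n + 1) → ZMod 2) :
        pack u = 2 ^ 6 * pack (Fin.tail u) + (u 0).val := by
      rw [pack, List.ofFn_succ, Nat.ofDigits_cons, add_comm]
      rfl
    simp only [pack_succ, two_pow_mul_add_xor (val_lt _) (val_lt _), ← val_add, ← ih]
    rfl

/-- The rows of a binary matrix as packed words. -/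
def packedRows (A : Matrix (Fin m) (Fin n) (ZMod 2)) : List ℕ := List.ofFn fun i ↦ pack (A i)

lemma packedRows_succ (A : Matrix (Fin (m + 1)) (Fin n) (ZMod 2)) :
    packedRows A = pack (A 0) :: packedRows (A.submatrix Fin.succ id) := List.ofFn_succ

/-- The number of ways to choose `k` entries of `rs`, a list of packed words, whose sum with `t` has
weight `l`. The recursors and the unbundled operations on `ℕ` keep kernel evaluation fast. -/
def subsetSumCount (l k : ℕ) : List ℕ → ℕ → ℕ :=
  k.rec (fun _ t ↦ ((t.mod 63).beq l).toNat) fun _ ih rs t ↦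
    rs.rec 0 fun r rs count ↦ count.add (ih rs (t.xor r))

lemma splitWeightCount_zero_left (A : Matrix (Fin m) (Fin n) (ZMod 2)) (t : Fin n → ZMod 2)
    (l : ℕ) : splitWeightCount A t 0 l = if hammingNorm t = l then 1 else 0 := by
  simp only [splitWeightCount, hammingNorm_eq_zero]
  split_ifs with ht
  · rw [card_eq_one]
    exact ⟨0, by ext x; simp +contextual [ht]⟩
  · rw [card_eq_zero, filter_eq_empty_iff]
    rintro x - ⟨rfl, h⟩
    simp [ht] at h

lemma splitWeightCount_succ_left (A : Matrix (Fin (m + 1)) (Fin n) (ZMod 2))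
    (t : Fin n → ZMod 2) (k l : ℕ) : splitWeightCount A t (k + 1) l =
      splitWeightCount (A.submatrix Fin.succ id) t (k + 1) l +
        splitWeightCount (A.submatrix Fin.succ id) (t + A 0) k l := by
  have weight_cons (a : ZMod 2) (x : Fin m → ZMod 2) :
      hammingNorm (vecCons a x) = a.val + hammingNorm x := by
    simp [hammingNorm_eq_sum_val, Fin.sum_univ_succ]
  have vecMul_cons (a : ZMod 2) (x : Fin m → ZMod 2) :
      vecCons a x ᵥ* A + t = x ᵥ* A.submatrix Fin.succ id + (t + a • A 0) := by
    ext j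
    simp only [vecMul, dotProduct, Fin.sum_univ_succ, cons_val_zero, cons_val_succ, Pi.add_apply,
      Pi.smul_apply, smul_eq_mul, submatrix_apply, id_eq]
    ring
  simp only [splitWeightCount, card_filter]
  calc ∑ x, (if hammingNorm x = k + 1 ∧ hammingNorm (x ᵥ* A + t) = l then 1 else 0)
      = ∑ a : ZMod 2, ∑ x : Fin m → ZMod 2, if hammingNorm (vecCons a x) = k + 1 ∧
          hammingNorm (vecCons a x ᵥ* A + t) = l then 1 else 0 := by
        rw [← (Fin.consEquiv fun _ ↦ ZMod 2).sum_comp, Fintype.sum_prod_type]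
        rfl
    _ = _ := by
        simp only [weight_cons, vecMul_cons, sum_zmod_two]
        simp [ZMod.val_one, add_comm 1]

lemma subsetSumCount_packedRows (hn : n < 63) (A : Matrix (Fin m) (Fin n) (ZMod 2))
    (t : Fin n → ZMod 2) (k l : ℕ) :
    subsetSumCount l k (packedRows A) (pack t) = splitWeightCount A t k l := by
  induction k generalizing m t with
  | zero =>
    change ((pack t % 63).beq l).toNat = _
    rw [splitWeightCount_zero_left, pack_mod_sixtyThree hn]
    obtain rfl | ht := eq_or_ne (hammingNorm t) l
    · simp
    · rw [if_neg ht, Bool.toNat_eq_zero, ← Bool.not_eq_true, Nat.beq_eq]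
      exact ht
  | succ k ihk =>
    induction m with
    | zero =>
      have weight_zero (x : Fin 0 → ZMod 2) : hammingNorm x = 0 := by simp [hammingNorm]
      simp [splitWeightCount, weight_zero, packedRows, subsetSumCount]
    | succ m ihm =>
      calc subsetSumCount l (k + 1) (packedRows A) (pack t)
          = subsetSumCount l (k + 1) (packedRows (A.submatrix Fin.succ id)) (pack t) +
              subsetSumCount l k (packedRows (A.submatrix Fin.succ id))
                (pack t ^^^ pack (A 0)) := by
            rw [packedRows_succ]
            rfl
        _ = splitWeightCount A t (k + 1) l := by
            rw [← pack_add, ihm, ihk, splitWeightCount_succ_left]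

end PackedWords

section WeightEnumerator

lemma sum_range_four_mul_add_one {M : Type*} [AddCommMonoid M] {f : ℕ → M}
    (hf : ∀ j, j % 4 ≠ 2 → f j = 0) (p : ℕ) :
    ∑ j ∈ range (4 * p + 1), f j = ∑ i ∈ range p, f (4 * i + 2) := by
  induction p with
  | zero => simp [hf 0]
  | succ p ih =>
    rw [show 4 * (p + 1) + 1 = 4 * p + 1 + 1 + 1 + 1 + 1 by ring]
    simp only [sum_range_succ _ (4 * p + _), sum_range_succ _ p, ih]
    rw [hf (4 * p + 1) (by omega), hf (4 * p + 1 + 1 + 1) (by omega),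
      hf (4 * p + 1 + 1 + 1 + 1) (by omega), add_zero, add_zero, add_zero]

variable {ι : Type*} [Fintype ι] {C : Submodule (ZMod 2) (ι → ZMod 2)} {s : ι → ZMod 2}

lemma cosetWeightCount_zero_zero (C : Submodule (ZMod 2) (ι → ZMod 2)) :
    cosetWeightCount C 0 0 = 1 := by
  rw [cosetWeightCount_zero_right, Set.ncard_eq_one]
  exact ⟨0, by ext c; simp +contextual [hammingNorm_eq_zero, C.zero_mem]⟩

lemma IsShadowVector.cosetWeightCount_eq_zero (hC : IsSelfDual C) (hs : IsShadowVector C s) {w : ℕ}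
    (hw : ¬ w ≡ hammingNorm s [MOD 4]) : cosetWeightCount C s w = 0 := by
  rw [cosetWeightCount_eq_zero_iff]
  rintro c hc rfl
  exact hw (hs.hammingNorm_add_modEq hC hc)

lemma IsShadowVector.sum_cosetWeightCount_mul_sum_krawtchouk (hC : IsSelfDual C)
    (hs : IsShadowVector C s) {d : ℕ} (a : Fin d → ℤ) :
    ∑ j ∈ range (Fintype.card ι + 1),
        (cosetWeightCount C s j : ℤ) * ∑ v, a v * krawtchouk (Fintype.card ι) (2 * v) j =
      Nat.card C * ∑ v, a v * ((-1) ^ v.val * cosetWeightCount C 0 (2 * v)) := by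
  simp only [mul_sum]
  rw [sum_comm]
  refine sum_congr rfl fun v _ ↦ ?_
  have macWilliams := hs.sum_cosetWeightCount_mul_krawtchouk hC (2 * v)
  rw [Nat.mul_div_cancel_left _ two_pos] at macWilliams
  rw [mul_left_comm, ← mul_assoc _ ((-1) ^ v.val), ← macWilliams, mul_sum]
  exact sum_congr rfl fun j _ ↦ mul_left_comm _ _ _

lemma IsSelfDual.two_mul_finrank {K : Type*} [Field K] {C : Submodule K (ι → K)}
    (hC : IsSelfDual C) : 2 * Module.finrank K C = Fintype.card ι := by
  classical
  have map_dualCode : (dualCode C).map (dotProductEquiv K ι : (ι → K) →ₗ[K] _) =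
      C.dualAnnihilator := by
    rw [Submodule.map_equiv_eq_comap_symm]
    ext φ
    obtain ⟨v, rfl⟩ := (dotProductEquiv K ι).surjective φ
    simp only [Submodule.mem_comap, LinearEquiv.coe_coe, LinearEquiv.symm_apply_apply,
      Submodule.mem_dualAnnihilator]
    rfl
  have finrank_dual : Module.finrank K C.dualAnnihilator = Module.finrank K C := by
    rw [← map_dualCode, ← hC]
    exact LinearEquiv.finrank_map_eq _ C
  rw [two_mul]
  simpa [finrank_dual] using Subspace.finrank_add_finrank_dualAnnihilator_eq C

lemma IsSelfDual.natCard_eq {n : ℕ} (hC : IsSelfDual C) (hn : Fintype.card ι = 2 * n) :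
    Nat.card C = 2 ^ n := by
  rw [Module.natCard_eq_pow_finrank (K := ZMod 2), Nat.card_zmod,
    ← mul_left_cancel₀ two_ne_zero (hC.two_mul_finrank.trans hn)]

lemma cosetWeightCount_zero_right_eq_zero {d w : ℕ} (hmin : ∀ c ∈ C, c ≠ 0 → d ≤ hammingNorm c)
    (hw : w ≠ 0) (hwd : w < d) : cosetWeightCount C 0 w = 0 := by
  rw [cosetWeightCount_eq_zero_iff]
  rintro c hc rfl
  rw [add_zero] at hw hwd
  exact hwd.not_ge (hmin c hc (hammingNorm_ne_zero_iff.1 hw))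

lemma IsShadowVector.sum_mul_cosetWeightCount_of_krawtchouk_eq (hC : IsSelfDual C)
    (hs : IsShadowVector C s) (hs4 : hammingNorm s ≡ 2 [MOD 4]) (hn : Fintype.card ι = 68) {d : ℕ}
    {a : Fin d → ℤ} {b₂ b₆ b₁₀ : ℤ}
    (ha : ∀ i : Fin 17, ∑ v, a v * krawtchouk 68 (2 * v) (4 * i + 2) =
      2 ^ 35 * ![b₂, b₆, b₁₀, 0, 0, 0, 0, 0, 0, 0, 0, 0, 0, 0, b₁₀, b₆, b₂] i) :
    ∑ v, a v * ((-1) ^ v.val * cosetWeightCount C 0 (2 * v)) =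
      4 * (b₂ * cosetWeightCount C s 2 + b₆ * cosetWeightCount C s 6 +
        b₁₀ * cosetWeightCount C s 10) := by
  have eq_zero (j : ℕ) (hj : j % 4 ≠ 2) : cosetWeightCount C s j = 0 :=
    hs.cosetWeightCount_eq_zero hC fun h ↦ hj (h.trans hs4)
  have card_C : (Nat.card C : ℤ) = 2 ^ 34 := by exact_mod_cast hC.natCard_eq (n := 34) hn
  have transform := hs.sum_cosetWeightCount_mul_sum_krawtchouk hC a
  rw [hn, sum_range_four_mul_add_one (p := 17) fun j hj ↦ by rw [eq_zero j hj]; simp, card_C,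
    ← Fin.sum_univ_eq_sum_range (fun i ↦ (cosetWeightCount C s (4 * i + 2) : ℤ) *
      ∑ v, a v * krawtchouk 68 (2 * v) (4 * i + 2))] at transform
  simp only [ha] at transform
  have reflect (w : ℕ) (hw : w ≤ 68) : cosetWeightCount C s (68 - w) = cosetWeightCount C s w :=
    hn ▸ hC.cosetWeightCount_card_sub s (hn ▸ hw)
  have reflect_two := reflect 2 (by norm_num)
  have reflect_six := reflect 6 (by norm_num)
  have reflect_ten := reflect 10 (by norm_num)
  simp only [Fin.sum_univ_succ, Fin.sum_univ_zero, Fin.val_succ, Fin.val_zero, cons_val_succ,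
    cons_val_zero, Nat.reduceAdd, Nat.reduceMul, Nat.reduceSub, mul_zero, zero_add, add_zero]
    at transform reflect_two reflect_six reflect_ten
  rw [reflect_two, reflect_six, reflect_ten] at transform
  linarith

theorem IsShadowVector.cosetWeightCount_twelve (hC : IsSelfDual C) (hs : IsShadowVector C s)
    (hs4 : hammingNorm s ≡ 2 [MOD 4]) (hn : Fintype.card ι = 68)
    (hmin : ∀ c ∈ C, c ≠ 0 → 12 ≤ hammingNorm c) :
    cosetWeightCount C 0 12 = 442 + 4 * (104 * cosetWeightCount C s 2 +
      14 * cosetWeightCount C s 6 + cosetWeightCount C s 10) := by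
  -- The Krawtchouk expansion of a multiple of `∏ k < 6, ((j - 34) ^ 2 - (4 * k) ^ 2)`.
  have transform := hs.sum_mul_cosetWeightCount_of_krawtchouk_eq hC hs4 hn
    (a := ![-442, 416, -38, 56, 3, 4, 1]) (b₂ := 104) (b₆ := 14) (b₁₀ := 1) (by decide +kernel)
  have relation : -442 + (cosetWeightCount C 0 12 : ℤ) = 4 * (104 * cosetWeightCount C s 2 +
      14 * cosetWeightCount C s 6 + cosetWeightCount C s 10) := by
    simpa [Fin.sum_univ_seven, cosetWeightCount_zero_zero,
      cosetWeightCount_zero_right_eq_zero hmin] using transform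
  omega

theorem IsShadowVector.cosetWeightCount_fourteen (hC : IsSelfDual C) (hs : IsShadowVector C s)
    (hs4 : hammingNorm s ≡ 2 [MOD 4]) (hn : Fintype.card ι = 68)
    (hmin : ∀ c ∈ C, c ≠ 0 → 12 ≤ hammingNorm c) :
    (cosetWeightCount C 0 14 : ℤ) = 14960 - 8 * (104 * cosetWeightCount C s 2 +
      14 * cosetWeightCount C s 6 + cosetWeightCount C s 10) -
      256 * (16 * cosetWeightCount C s 2 + cosetWeightCount C s 6) := by
  have count_twelve := hs.cosetWeightCount_twelve hC hs4 hn hmin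
  -- The Krawtchouk expansion of a multiple of `∏ k < 7, ((j - 34) ^ 2 - (4 * k) ^ 2)`.
  have transform := hs.sum_mul_cosetWeightCount_of_krawtchouk_eq hC hs4 hn
    (a := ![15844, -5408, 1628, -403, 74, -4, -2, 1]) (b₂ := 1024) (b₆ := 64) (b₁₀ := 0)
    (by decide +kernel)
  have relation : 15844 - 2 * (cosetWeightCount C 0 12 : ℤ) - cosetWeightCount C 0 14 =
      4 * (1024 * cosetWeightCount C s 2 + 64 * cosetWeightCount C s 6) := by
    simpa [Fin.sum_univ_eight, cosetWeightCount_zero_zero, sub_eq_add_neg,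
      cosetWeightCount_zero_right_eq_zero hmin] using transform
  omega

end WeightEnumerator

section Construction

variable {n : ℕ}

/-- The number of words of weight `2 * d` in the coset of `(0, h ᵥ* A)` in the code of `[1 | A]`, as
computed by enumerating the words whose lighter half has weight at most `d`. -/
def packedCosetWeightCount (A : Matrix (Fin n) (Fin n) (ZMod 2)) (h : Fin n → ZMod 2) (d : ℕ) : ℕ :=
  ∑ k ∈ range (d + 1), subsetSumCount (2 * d - k) k (packedRows A) (pack (h ᵥ* A)) +
    ∑ k ∈ range d, subsetSumCount (2 * d - k) k (packedRows Aᵀ) (pack h)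

lemma cosetWeightCount_eq_packedCosetWeightCount (hn : n < 63)
    {A : Matrix (Fin n) (Fin n) (ZMod 2)} (hA : A * Aᵀ = 1) (h : Fin n → ZMod 2) (d : ℕ) :
    cosetWeightCount (systematicCode A) (Fin.append 0 (h ᵥ* A)) (2 * d) =
      packedCosetWeightCount A h d := by
  simp only [cosetWeightCount_systematicCode_two_mul hA, packedCosetWeightCount,
    subsetSumCount_packedRows hn]

/-- An `11 × 11` array of `3 × 3` circulants. The bits of the entry `(I, J)` of `blocks`, lowest bit
first, are the first row of the block `(I, J)`. -/
def circulantArray : Matrix (Fin (11 * 3)) (Fin (11 * 3)) (ZMod 2) :=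
  let blocks : Matrix (Fin 11) (Fin 11) ℕ :=
    !![2, 6, 2, 4, 3, 3, 2, 4, 3, 2, 3;
       7, 1, 4, 7, 6, 6, 0, 0, 2, 5, 4;
       1, 4, 3, 2, 6, 6, 4, 7, 6, 7, 3;
       1, 7, 7, 4, 3, 2, 3, 3, 5, 5, 4;
       2, 7, 1, 2, 2, 3, 3, 6, 0, 3, 4;
       7, 7, 7, 5, 4, 4, 6, 1, 2, 0, 4;
       3, 1, 7, 2, 2, 2, 0, 2, 2, 3, 1;
       3, 6, 0, 6, 1, 4, 0, 6, 4, 4, 5;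
       7, 3, 0, 2, 0, 5, 7, 2, 6, 2, 2;
       7, 3, 0, 7, 2, 1, 5, 2, 7, 5, 3;
       3, 0, 3, 5, 7, 4, 2, 5, 2, 3, 3]
  Matrix.of fun i j ↦
    if (blocks i.divNat j.divNat).testBit (j.modNat - i.modNat : Fin 3) then 1 else 0

/-- `circulantArray` bordered by ones, with a zero corner. -/
def codeMatrix : Matrix (Fin 34) (Fin 34) (ZMod 2) :=
  Matrix.of (vecCons (vecCons 0 1) fun i ↦ vecCons 1 (circulantArray i))

lemma codeMatrix_mul_transpose : codeMatrix * codeMatrixᵀ = 1 := by decide +kernel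

lemma packedCosetWeightCount_codeMatrix_zero {d : ℕ} (hd : d < 6) (hd₀ : d ≠ 0) :
    packedCosetWeightCount codeMatrix 0 d = 0 := by
  decide +kernel +revert

/-- The self-dual `[68, 34, 12]` code with generator matrix `[1 | codeMatrix]`. -/
def code68 : Submodule (ZMod 2) (Fin 68 → ZMod 2) := systematicCode codeMatrix

/-- A word whose coset is the shadow of `code68`. -/
def shadowVector68 : Fin 68 → ZMod 2 := Fin.append 0 (halfRowWeights codeMatrix ᵥ* codeMatrix)

lemma isSelfDual_code68 : IsSelfDual code68 :=
  isSelfDual_systematicCode (codeMatrix_mul_transpose.trans (ZModModule.neg_eq_self 1).symm)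

lemma isShadowVector_shadowVector68 : IsShadowVector code68 shadowVector68 :=
  isShadowVector_systematicCode codeMatrix_mul_transpose

lemma hammingNorm_shadowVector68 : hammingNorm shadowVector68 = 22 := by decide +kernel

lemma twelve_le_hammingNorm_of_mem_code68 {c : Fin 68 → ZMod 2} (hc : c ∈ code68) (hc₀ : c ≠ 0) :
    12 ≤ hammingNorm c := by
  obtain ⟨d, hd⟩ := even_iff_two_dvd.1 (isSelfDual_code68.even_hammingNorm hc)
  by_contra! hlt
  have hd₀ : d ≠ 0 := by
    rintro rfl
    exact hc₀ (hammingNorm_eq_zero.1 hd)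
  have append_zero :
      Fin.append (0 : Fin 34 → ZMod 2) ((0 : Fin 34 → ZMod 2) ᵥ* codeMatrix) = 0 := by
    rw [zero_vecMul]
    decide
  have count_eq_zero : cosetWeightCount code68 0 (2 * d) = 0 := calc
    _ = packedCosetWeightCount codeMatrix 0 d := by
      rw [← cosetWeightCount_eq_packedCosetWeightCount (by norm_num) codeMatrix_mul_transpose,
        append_zero]
      rfl
    _ = 0 := packedCosetWeightCount_codeMatrix_zero (by omega) hd₀
  exact cosetWeightCount_eq_zero_iff.1 count_eq_zero c hc (by rw [add_zero, hd])

lemma cosetWeightCount_code68_shadowVector68 :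
    cosetWeightCount code68 shadowVector68 2 = 0 ∧ cosetWeightCount code68 shadowVector68 6 = 2 ∧
      cosetWeightCount code68 shadowVector68 10 = 33 := by
  have packed_count (d : ℕ) : cosetWeightCount code68 shadowVector68 (2 * d) =
      packedCosetWeightCount codeMatrix (halfRowWeights codeMatrix) d :=
    cosetWeightCount_eq_packedCosetWeightCount (by norm_num) codeMatrix_mul_transpose _ d
  rw [packed_count 1, packed_count 3, packed_count 5]
  decide +kernel

end Construction

/-- There exists a binary self-dual `[68, 34, 12]` code with weight enumerator
`W_{68,2}` (γ = 2, β = 61): minimum nonzero weight 12, exactly 686 codewords of weight 12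
and exactly 13960 codewords of weight 14. -/
theorem exists_selfDual_68_14 :
    ∃ C : Submodule (ZMod 2) (Fin 68 → ZMod 2),
      IsSelfDual C ∧
      (∀ v ∈ C, v ≠ 0 → 12 ≤ hammingNorm v) ∧
      (∃ v ∈ C, hammingNorm v = 12) ∧
      {v | v ∈ C ∧ hammingNorm v = 12}.ncard = 686 ∧
      {v | v ∈ C ∧ hammingNorm v = 14}.ncard = 13960 := by
  have hC := isSelfDual_code68
  have hs := isShadowVector_shadowVector68
  have weight_shadow : hammingNorm shadowVector68 ≡ 2 [MOD 4] := by
    rw [hammingNorm_shadowVector68]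
    rfl
  have min_weight (c) (hc : c ∈ code68) (hc₀ : c ≠ 0) := twelve_le_hammingNorm_of_mem_code68 hc hc₀
  obtain ⟨shadow_two, shadow_six, shadow_ten⟩ := cosetWeightCount_code68_shadowVector68
  have count_twelve : cosetWeightCount code68 0 12 = 686 := by
    rw [hs.cosetWeightCount_twelve hC weight_shadow (Fintype.card_fin 68) min_weight, shadow_two,
      shadow_six, shadow_ten]
  have count_fourteen : cosetWeightCount code68 0 14 = 13960 := by
    zify
    rw [hs.cosetWeightCount_fourteen hC weight_shadow (Fintype.card_fin 68) min_weight, shadow_two,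
      shadow_six, shadow_ten]
    norm_num
  rw [cosetWeightCount_zero_right] at count_twelve count_fourteen
  refine ⟨code68, hC, min_weight, ?_, count_twelve, count_fourteen⟩
  exact Set.nonempty_of_ncard_ne_zero (count_twelve.trans_ne (by norm_num))
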